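/- arXiv:math/0611929 — 3 statements merged into one kernel-verified Lean document; each statement's English description precedes it below -/
import Mathlib

section
/- Let S be a tight representation of a semigroupoid Λ in a unital C*-algebra and let f ∈ Λ be such that Λ^f is finite and every element of Λ^f is a spring. Then S_f = 0. -/
universe u

/-- A semigroupoid: a set with a partially defined associative operation
(Exel, Definition 2.1). -/
structure Semigroupoid (Λ : Type u) where
  /-- the set of composable pairs -/
  D2 : Λ → Λ → Prop
  /-- the (partially meaningful) multiplication -/
  mul : Λ → Λ → Λ
  assoc₁ : ∀ f g h, D2 f g → D2 g h →
    D2 (mul f g) h ∧ D2 f (mul g h) ∧ mul (mul f g) h = mul f (mul g h)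
  assoc₂ : ∀ f g h, D2 f g → D2 (mul f g) h →
    D2 g h ∧ D2 f (mul g h) ∧ mul (mul f g) h = mul f (mul g h)
  assoc₃ : ∀ f g h, D2 g h → D2 f (mul g h) →
    D2 f g ∧ D2 (mul f g) h ∧ mul (mul f g) h = mul f (mul g h)

namespace Semigroupoid

variable {Λ : Type u} (G : Semigroupoid Λ)

/-- `f` divides `g` : either `f = g` or `f h = g` for some `h`. -/
def Divides (f g : Λ) : Prop := f = g ∨ ∃ h, G.D2 f h ∧ G.mul f h = g

/-- `f` and `g` intersect: they admit a common multiple. -/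
def Intersects (f g : Λ) : Prop := ∃ m, G.Divides f m ∧ G.Divides g m

/-- `f` and `g` are disjoint: no common multiple. -/
def Disjnt (f g : Λ) : Prop := ¬ G.Intersects f g

/-- `Λ^f`, the set of elements composable with `f` on the right. -/
def lam (f : Λ) : Set Λ := {g | G.D2 f g}

/-- A spring: an element `f` with `Λ^f = ∅`. -/
def IsSpring (f : Λ) : Prop := ∀ g, ¬ G.D2 f g

/-- `H` is a covering of `X`: `H ⊆ X` and every element of `X` intersects some element of `H`. -/
def IsCovering (H X : Set Λ) : Prop := H ⊆ X ∧ ∀ f ∈ X, ∃ h ∈ H, G.Intersects f h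

/-- `H` is a partition of `X`: a covering whose elements are pairwise disjoint. -/
def IsPartition (H X : Set Λ) : Prop :=
  G.IsCovering H X ∧ ∀ h₁ ∈ H, ∀ h₂ ∈ H, h₁ ≠ h₂ → G.Disjnt h₁ h₂

/-- `Λ^{F,G'} = (⋂_{f∈F} Λ^f) ∩ (⋂_{g∈G'} (Λ \ Λ^g))`. -/
def lamFG (F G' : Finset Λ) : Set Λ :=
  {h | (∀ f ∈ F, G.D2 f h) ∧ ∀ g ∈ G', ¬ G.D2 g h}

end Semigroupoid

section Repn

variable {Λ : Type u} {B : Type*} [Ring B] [StarRing B]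

/-- initial projection -/
def QQ (S : Λ → B) (f : Λ) : B := star (S f) * S f

/-- final projection -/
def PP (S : Λ → B) (f : Λ) : B := S f * star (S f)

/-- A representation of a semigroupoid in a unital C*-algebra (Exel, Definition 4.1). -/
structure IsRepn (G : Semigroupoid Λ) (S : Λ → B) : Prop where
  partialIsometry : ∀ f, S f * star (S f) * S f = S f
  map_comp : ∀ f g, G.D2 f g → S f * S g = S (G.mul f g)
  map_ncomp : ∀ f g, ¬ G.D2 f g → S f * S g = 0
  commQQ : ∀ f g, Commute (QQ S f) (QQ S g)
  commQP : ∀ f g, Commute (QQ S f) (PP S g)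
  commPP : ∀ f g, Commute (PP S f) (PP S g)
  orthPP : ∀ f g, G.Disjnt f g → PP S f * PP S g = 0
  QdomP : ∀ f g, G.D2 f g → QQ S f * PP S g = PP S g

/-- the product `∏_{f ∈ F} T f` (of pairwise commuting elements), via a choice of order. -/
noncomputable def fprod (F : Finset Λ) (T : Λ → B) : B := (F.toList.map T).prod

/-- the supremum `⋁_{h ∈ H} PP S h` of commuting final projections,
`P ∨ Q = P + Q - P Q`, i.e. `1 - ∏ (1 - P h)`. -/
noncomputable def joinP (H : Finset Λ) (S : Λ → B) : B := 1 - fprod H (fun h => 1 - PP S h)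

/-- Tight representation (Exel, Definition 4.5). -/
def IsTight (G : Semigroupoid Λ) (S : Λ → B) : Prop :=
  ∀ (F G' H : Finset Λ), G.IsCovering ↑H (G.lamFG F G') →
    joinP H S = fprod F (QQ S) * fprod G' (fun g => 1 - QQ S g)

end Repn

/-!
If a finite covering `H` of `Λ^f` consists of elements killed by `S`, then tightness for the pair
`({f}, ∅)` gives `Q_f = ⋁_{h ∈ H} P_h = 0`, hence `S_f = S_f Q_f = 0`. Applied to the empty covering
of `Λ^g = ∅`, this kills every spring `g`; applied once more, it kills every `f` for which `Λ^f` has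
a finite covering by springs.
-/

namespace Semigroupoid

variable {Λ : Type u} {G : Semigroupoid Λ}

theorem Intersects.refl (f : Λ) : G.Intersects f f :=
  ⟨f, Or.inl rfl, Or.inl rfl⟩

theorem IsCovering.refl (X : Set Λ) : G.IsCovering X X :=
  ⟨subset_rfl, fun f hf => ⟨f, hf, Intersects.refl f⟩⟩

theorem IsSpring.lam_eq_empty {f : Λ} (hf : G.IsSpring f) : G.lam f = ∅ :=
  Set.eq_empty_of_forall_notMem hf

theorem lamFG_singleton_empty (f : Λ) : G.lamFG {f} ∅ = G.lam f := by
  simp [lamFG, lam]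

end Semigroupoid

section

variable {Λ : Type u} {B : Type*} [Ring B]

theorem fprod_empty (T : Λ → B) : fprod ∅ T = 1 := by
  simp [fprod]

theorem fprod_singleton (f : Λ) (T : Λ → B) : fprod {f} T = T f := by
  simp [fprod]

theorem fprod_eq_one {F : Finset Λ} {T : Λ → B} (hT : ∀ f ∈ F, T f = 1) : fprod F T = 1 :=
  List.prod_eq_one <| List.forall_mem_map.2 fun f hf => hT f (Finset.mem_toList.1 hf)

variable [StarRing B] {G : Semigroupoid Λ} {S : Λ → B}

theorem joinP_eq_zero {H : Finset Λ} (hH : ∀ h ∈ H, S h = 0) : joinP H S = 0 := by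
  have hfactor : ∀ h ∈ H, 1 - PP S h = 1 := fun h hh => by simp [PP, hH h hh]
  rw [joinP, fprod_eq_one hfactor, sub_self]

theorem IsTight.joinP_eq_QQ (ht : IsTight G S) {f : Λ} {H : Finset Λ}
    (hH : G.IsCovering H (G.lam f)) : joinP H S = QQ S f := by
  rw [← Semigroupoid.lamFG_singleton_empty] at hH
  rw [ht {f} ∅ H hH, fprod_singleton, fprod_empty, mul_one]

theorem IsRepn.mul_QQ (hS : IsRepn G S) (f : Λ) : S f * QQ S f = S f := by
  rw [QQ, ← mul_assoc, hS.partialIsometry]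

theorem IsTight.eq_zero_of_isCovering (ht : IsTight G S) (hS : IsRepn G S) {f : Λ} {H : Finset Λ}
    (hH : G.IsCovering H (G.lam f)) (hzero : ∀ h ∈ H, S h = 0) : S f = 0 := by
  rw [← hS.mul_QQ f, ← ht.joinP_eq_QQ hH, joinP_eq_zero hzero, mul_zero]

theorem IsTight.eq_zero_of_isSpring (ht : IsTight G S) (hS : IsRepn G S) {g : Λ}
    (hg : G.IsSpring g) : S g = 0 := by
  have hcov : G.IsCovering (∅ : Finset Λ) (G.lam g) := by
    rw [hg.lam_eq_empty, Finset.coe_empty]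
    exact .refl ∅
  exact ht.eq_zero_of_isCovering hS hcov (by simp)

theorem tight_repn_eq_zero_of_springs_general (hS : IsRepn G S) (ht : IsTight G S) (f : Λ)
    {H : Set Λ} (hfin : H.Finite) (hH : G.IsCovering H (G.lam f))
    (hsp : ∀ h ∈ H, G.IsSpring h) : S f = 0 := by
  lift H to Finset Λ using hfin
  exact ht.eq_zero_of_isCovering hS hH fun h hh => ht.eq_zero_of_isSpring hS (hsp h hh)

end

/-- If `Λ^f` is finite and consists of springs, every tight representation kills `f`. -/
theorem tight_repn_eq_zero_of_springs {Λ : Type u} {B : Type*} [CStarAlgebra B]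
    {G : Semigroupoid Λ} {S : Λ → B} (hS : IsRepn G S) (ht : IsTight G S)
    (f : Λ) (hfin : (G.lam f).Finite) (hsp : ∀ g ∈ G.lam f, G.IsSpring g) :
    S f = 0 :=
  tight_repn_eq_zero_of_springs_general hS ht f hfin (.refl _) hsp
end

section
/- Let Λ be a small category, viewed as a semigroupoid, and let S : Λ → B(H) be a representation on a Hilbert space H. If either S is nondegenerate or obj(Λ) is infinite, then for all finite subsets F, G ⊆ Λ with Λ^{F,G} = ∅ one has ∏_{f∈F} Q_f · ∏_{g∈G} (1 − Q_g) = 0. -/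
universe u

/-- A small category, viewed as a semigroupoid whose elements are all its morphisms:
`(f,g)` is composable iff `s f = r g`; objects are identified with identity morphisms. -/
structure CatSemigroupoid (Λ : Type u) extends Semigroupoid Λ where
  /-- source (domain) of a morphism, as an identity morphism -/
  src : Λ → Λ
  /-- range (codomain) of a morphism, as an identity morphism -/
  rng : Λ → Λ
  /-- the morphisms which are (identities on) objects -/
  IsObj : Λ → Prop
  obj_src : ∀ f, IsObj (src f)
  obj_rng : ∀ f, IsObj (rng f)
  src_obj : ∀ v, IsObj v → src v = v
  rng_obj : ∀ v, IsObj v → rng v = v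
  comp_iff : ∀ f g, D2 f g ↔ src f = rng g
  mul_src : ∀ f, mul f (src f) = f
  rng_mul' : ∀ f, mul (rng f) f = f
  src_mul : ∀ f g, D2 f g → src (mul f g) = src g
  rng_mul : ∀ f g, D2 f g → rng (mul f g) = rng f

namespace CatSemigroupoid

variable {Λ : Type u} (C : CatSemigroupoid Λ)

/-- for an object `v`, `Λ^v = {g : r g = v}`. -/
def lamObj (v : Λ) : Set Λ := {g | C.rng g = v}

end CatSemigroupoid
section Hilb

variable {Λ : Type u} {H : Type*} [NormedAddCommGroup H] [InnerProductSpace ℂ H] [CompleteSpace H]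

/-- A representation on a Hilbert space is nondegenerate if the closed *-subalgebra of `B(H)`
generated by its range acts nondegenerately on `H`. -/
def Nondegen (S : Λ → (H →L[ℂ] H)) : Prop :=
  (Submodule.span ℂ {y : H | ∃ a ∈ (NonUnitalStarAlgebra.adjoin ℂ
      (Set.range S)).topologicalClosure, ∃ x : H, a x = y}).topologicalClosure = ⊤

end Hilb

/-!
For every object `v`, the operator `S v` is a projection commuting with all factors of the product
`T = ∏_{f ∈ F} Q_f · ∏_{g ∈ G'} (1 - Q_g)`, and `Q_f = S (src f)`. Since `v ∉ Λ^{F,G'}`, either some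
`f ∈ F` has `src f ≠ v` and `S v * Q_f = 0`, or some `g ∈ G'` has `src g = v` and
`S v * (1 - Q_g) = 0`. Thus `T` is annihilated by every object, hence by every `S f` and `(S f)*`,
and `T = 0` if `S` is nondegenerate. If there are infinitely many objects, then `F ≠ ∅`, as
otherwise every object would be the source of an element of `G'`; and any `f ∈ F` gives
`T = S (src f) * T = 0`.
-/

section FProd

variable {Λ : Type u} {B : Type*} [Ring B] {F : Finset Λ} {T : Λ → B}

theorem fprod_eq_noncommProd (hT : (F : Set Λ).Pairwise (Function.onFun Commute T)) :
    fprod F T = F.noncommProd T hT := by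
  classical
  simpa only [Finset.toList_toFinset, fprod] using
    (Finset.noncommProd_toFinset F.toList T (by simpa using hT) F.nodup_toList).symm

theorem dvd_fprod (hT : (F : Set Λ).Pairwise (Function.onFun Commute T)) {f : Λ} (hf : f ∈ F) :
    T f ∣ fprod F T := by
  classical
  rw [fprod_eq_noncommProd hT]
  exact ⟨_, (F.mul_noncommProd_erase hf T hT).symm⟩

theorem commute_fprod {x : B} (hx : ∀ f ∈ F, Commute x (T f)) : Commute x (fprod F T) := by
  refine Commute.list_prod_right _ _ fun y hy => ?_
  obtain ⟨f, hf, rfl⟩ := List.mem_map.1 hy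
  exact hx f (Finset.mem_toList.1 hf)

end FProd

namespace CatSemigroupoid

variable {Λ : Type u} {C : CatSemigroupoid Λ} {f v : Λ} {F G' : Finset Λ}

theorem d2_iff_src_eq (hv : C.IsObj v) : C.D2 f v ↔ C.src f = v := by
  rw [C.comp_iff, C.rng_obj v hv]

theorem d2_src (f : Λ) : C.D2 f (C.src f) := (d2_iff_src_eq (C.obj_src f)).2 rfl

theorem d2_rng (f : Λ) : C.D2 (C.rng f) f := by
  rw [C.comp_iff, C.src_obj _ (C.obj_rng f)]

theorem exists_src_ne_or_exists_src_eq (hempty : C.lamFG F G' = ∅) (hv : C.IsObj v) :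
    (∃ f ∈ F, C.src f ≠ v) ∨ ∃ g ∈ G', C.src g = v := by
  by_contra! h
  have hmem : v ∈ C.lamFG F G' :=
    ⟨fun f hf => (d2_iff_src_eq hv).2 (h.1 f hf), fun g hg => mt (d2_iff_src_eq hv).1 (h.2 g hg)⟩
  simp [hempty] at hmem

theorem finite_setOf_isObj (hempty : C.lamFG ∅ G' = ∅) : {v | C.IsObj v}.Finite :=
  (G'.finite_toSet.image C.src).subset fun _ hv =>
    (exists_src_ne_or_exists_src_eq hempty hv).resolve_left (by simp)

end CatSemigroupoid

namespace IsRepn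

variable {Λ : Type u} {B : Type*} [Ring B] [StarRing B] {S : Λ → B}

theorem QQ_mul_star {G : Semigroupoid Λ} (hS : IsRepn G S) (f : Λ) :
    QQ S f * star (S f) = star (S f) := by
  simpa [QQ, mul_assoc] using congr(star $(hS.partialIsometry f))

variable {C : CatSemigroupoid Λ} {f v : Λ} {F G' : Finset Λ}

theorem isIdempotentElem_obj (hS : IsRepn C.toSemigroupoid S) (hv : C.IsObj v) :
    IsIdempotentElem (S v) := by
  have hvv : C.mul v v = v := by simpa only [C.src_obj v hv] using C.mul_src v
  rw [IsIdempotentElem, hS.map_comp v v ((C.d2_iff_src_eq hv).2 (C.src_obj v hv)), hvv]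

theorem isStarProjection_obj (hS : IsRepn C.toSemigroupoid S) (hv : C.IsObj v) :
    IsStarProjection (S v) := by
  have hidem := hS.isIdempotentElem_obj hv
  have star_eq_PP : star (S v) = PP S v :=
    calc star (S v) = star (S v) * (S v * S v) * star (S v) := by
          rw [hidem.eq, ← QQ, hS.QQ_mul_star]
      _ = QQ S v * PP S v := by simp only [QQ, PP, mul_assoc]
      _ = PP S v := hS.QdomP v v ((C.d2_iff_src_eq hv).2 (C.src_obj v hv))
  refine ⟨hidem, ?_⟩
  rw [← IsSelfAdjoint.star_iff, star_eq_PP]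
  exact .mul_star_self (S v)

theorem QQ_eq_map_src (hS : IsRepn C.toSemigroupoid S) (f : Λ) : QQ S f = S (C.src f) := by
  have hproj := hS.isStarProjection_obj (C.obj_src f)
  have PP_src : PP S (C.src f) = S (C.src f) := by
    rw [PP, hproj.isSelfAdjoint.star_eq, hproj.isIdempotentElem.eq]
  calc QQ S f = QQ S f * S (C.src f) := by
        rw [QQ, mul_assoc, hS.map_comp _ _ (C.d2_src f), C.mul_src]
    _ = S (C.src f) := by rw [← PP_src, hS.QdomP _ _ (C.d2_src f)]

theorem commute_obj_QQ (hS : IsRepn C.toSemigroupoid S) (hv : C.IsObj v) (f : Λ) :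
    Commute (S v) (QQ S f) := by
  simpa only [hS.QQ_eq_map_src v, C.src_obj v hv] using hS.commQQ v f

theorem obj_mul_QQ_of_src_ne (hS : IsRepn C.toSemigroupoid S) (hv : C.IsObj v)
    (hf : C.src f ≠ v) : S v * QQ S f = 0 := by
  rw [hS.QQ_eq_map_src]
  refine hS.map_ncomp _ _ fun hD => hf ?_
  rw [← (C.d2_iff_src_eq (C.obj_src f)).1 hD, C.src_obj v hv]

theorem commute_obj_fprod_QQ (hS : IsRepn C.toSemigroupoid S) (hv : C.IsObj v) (F : Finset Λ) :
    Commute (S v) (fprod F (QQ S)) :=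
  commute_fprod fun f _ => hS.commute_obj_QQ hv f

theorem commute_obj_fprod_one_sub_QQ (hS : IsRepn C.toSemigroupoid S) (hv : C.IsObj v)
    (G' : Finset Λ) : Commute (S v) (fprod G' fun g => 1 - QQ S g) :=
  commute_fprod fun g _ => (Commute.one_right _).sub_right (hS.commute_obj_QQ hv g)

theorem obj_mul_fprod_QQ_eq_zero (hS : IsRepn C.toSemigroupoid S) (hv : C.IsObj v) (hf : f ∈ F)
    (hfv : C.src f ≠ v) : S v * fprod F (QQ S) = 0 := by
  obtain ⟨y, hy⟩ := dvd_fprod (T := QQ S) (fun f _ g _ _ => hS.commQQ f g) hf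
  rw [hy, ← mul_assoc, hS.obj_mul_QQ_of_src_ne hv hfv, zero_mul]

theorem map_src_mul_fprod_QQ (hS : IsRepn C.toSemigroupoid S) (hf : f ∈ F) :
    S (C.src f) * fprod F (QQ S) = fprod F (QQ S) := by
  obtain ⟨y, hy⟩ := dvd_fprod (T := QQ S) (fun f _ g _ _ => hS.commQQ f g) hf
  rw [hy, ← mul_assoc, hS.QQ_eq_map_src, (hS.isIdempotentElem_obj (C.obj_src f)).eq]

theorem map_src_mul_fprod_one_sub_QQ_eq_zero (hS : IsRepn C.toSemigroupoid S) (hf : f ∈ G') :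
    S (C.src f) * fprod G' (fun g => 1 - QQ S g) = 0 := by
  have hcomm : (G' : Set Λ).Pairwise (Function.onFun Commute fun g => 1 - QQ S g) :=
    fun f _ g _ _ => (Commute.one_left _).sub_left ((Commute.one_right _).sub_right (hS.commQQ f g))
  obtain ⟨y, hy⟩ := dvd_fprod hcomm hf
  rw [hy, ← mul_assoc, hS.QQ_eq_map_src,
    (hS.isIdempotentElem_obj (C.obj_src f)).mul_one_sub_self, zero_mul]

theorem obj_mul_prod_eq_zero (hS : IsRepn C.toSemigroupoid S) (hempty : C.lamFG F G' = ∅)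
    (hv : C.IsObj v) : S v * (fprod F (QQ S) * fprod G' fun g => 1 - QQ S g) = 0 := by
  rcases C.exists_src_ne_or_exists_src_eq hempty hv with ⟨f, hf, hfv⟩ | ⟨g, hg, rfl⟩
  · rw [← mul_assoc, hS.obj_mul_fprod_QQ_eq_zero hv hf hfv, zero_mul]
  · rw [(hS.commute_obj_fprod_QQ hv F).left_comm, hS.map_src_mul_fprod_one_sub_QQ_eq_zero hg,
      mul_zero]

theorem prod_mul_obj_eq_zero (hS : IsRepn C.toSemigroupoid S) (hempty : C.lamFG F G' = ∅)
    (hv : C.IsObj v) : fprod F (QQ S) * fprod G' (fun g => 1 - QQ S g) * S v = 0 := by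
  rw [← ((hS.commute_obj_fprod_QQ hv F).mul_right (hS.commute_obj_fprod_one_sub_QQ hv G')).eq,
    hS.obj_mul_prod_eq_zero hempty hv]

theorem prod_eq_zero_of_nonempty (hS : IsRepn C.toSemigroupoid S) (hempty : C.lamFG F G' = ∅)
    (hF : F.Nonempty) : fprod F (QQ S) * fprod G' (fun g => 1 - QQ S g) = 0 := by
  obtain ⟨f, hf⟩ := hF
  rw [← hS.map_src_mul_fprod_QQ hf, mul_assoc, hS.obj_mul_prod_eq_zero hempty (C.obj_src f)]

theorem mul_map_eq_zero (hS : IsRepn C.toSemigroupoid S) {T : B}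
    (hT : ∀ v, C.IsObj v → T * S v = 0) (f : Λ) : T * S f = 0 := by
  rw [← C.rng_mul' f, ← hS.map_comp _ _ (C.d2_rng f), ← mul_assoc, hT _ (C.obj_rng f), zero_mul]

theorem mul_star_map_eq_zero (hS : IsRepn C.toSemigroupoid S) {T : B}
    (hT : ∀ v, C.IsObj v → T * S v = 0) (f : Λ) : T * star (S f) = 0 := by
  rw [← hS.QQ_mul_star, hS.QQ_eq_map_src, ← mul_assoc, hT _ (C.obj_src f), zero_mul]

end IsRepn

theorem mul_eq_zero_of_mem_starAdjoin {R A : Type*} [CommSemiring R] [StarRing R]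
    [NonUnitalSemiring A] [StarRing A] [Module R A] [IsScalarTower R A A] [SMulCommClass R A A]
    [StarModule R A] {s : Set A} {T a : A} (hs : ∀ x ∈ s, T * x = 0)
    (hs_star : ∀ x ∈ s, T * star x = 0) (ha : a ∈ NonUnitalStarAlgebra.adjoin R s) :
    T * a = 0 := by
  change a ∈ NonUnitalAlgebra.adjoin R (s ∪ star s) at ha
  induction ha using NonUnitalAlgebra.adjoin_induction with
  | mem x hx => exact hx.elim (hs x) fun hx => by simpa using hs_star (star x) hx
  | add x y _ _ hx hy => rw [mul_add, hx, hy, add_zero]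
  | zero => exact mul_zero T
  | mul x y _ _ hx _ => rw [← mul_assoc, hx, zero_mul]
  | smul r x _ hx => rw [mul_smul_comm, hx, smul_zero]

theorem Nondegen.eq_zero_of_mul_eq_zero {Λ : Type u} {H : Type*} [NormedAddCommGroup H]
    [InnerProductSpace ℂ H] [CompleteSpace H] {S : Λ → H →L[ℂ] H} (hS : Nondegen S)
    {T : H →L[ℂ] H} (hT : ∀ f, T * S f = 0) (hT_star : ∀ f, T * star (S f) = 0) : T = 0 := by
  have mul_eq_zero_of_mem_closure :
      ∀ a ∈ (NonUnitalStarAlgebra.adjoin ℂ (Set.range S)).topologicalClosure, T * a = 0 :=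
    closure_minimal (t := {a | T * a = 0})
      (fun _ => mul_eq_zero_of_mem_starAdjoin (Set.forall_mem_range.2 hT)
        (Set.forall_mem_range.2 hT_star))
      (isClosed_eq (continuous_const_mul T) continuous_const)
  have top_le_ker : (⊤ : Submodule ℂ H) ≤ T.ker := by
    rw [← hS]
    refine Submodule.topologicalClosure_minimal _ (Submodule.span_le.2 ?_) T.isClosed_ker
    rintro _ ⟨a, ha, x, rfl⟩
    exact congr($(mul_eq_zero_of_mem_closure a ha) x)
  ext x
  exact top_le_ker Submodule.mem_top

theorem cat_repn_prod_eq_zero_general {Λ : Type u} {B : Type*} [Ring B] [StarRing B]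
    (C : CatSemigroupoid Λ) {S : Λ → B} (hS : IsRepn C.toSemigroupoid S)
    (hnd : (∀ T : B, (∀ f, T * S f = 0) → T = 0) ∨ {v | C.IsObj v}.Infinite)
    (F G' : Finset Λ) (hempty : C.toSemigroupoid.lamFG F G' = ∅) :
    fprod F (QQ S) * fprod G' (fun g => 1 - QQ S g) = 0 := by
  rcases hnd with hann | hinf
  · exact hann _ (hS.mul_map_eq_zero fun _ => hS.prod_mul_obj_eq_zero hempty)
  · refine hS.prod_eq_zero_of_nonempty hempty (Finset.nonempty_iff_ne_empty.2 ?_)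
    rintro rfl
    exact hinf (C.finite_setOf_isObj hempty)

/-- Nondegenerate (or infinite-object) Hilbert space representations of a small category
vanish on empty `Λ^{F,G'}`. -/
theorem cat_repn_prod_eq_zero {Λ : Type u} {H : Type*} [NormedAddCommGroup H]
    [InnerProductSpace ℂ H] [CompleteSpace H]
    (C : CatSemigroupoid Λ) {S : Λ → H →L[ℂ] H} (hS : IsRepn C.toSemigroupoid S)
    (hnd : Nondegen S ∨ (setOf C.IsObj).Infinite)
    (F G' : Finset Λ) (hempty : C.toSemigroupoid.lamFG F G' = ∅) :
    fprod F (QQ S) * fprod G' (fun g => 1 - QQ S g) = 0 := by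
  refine cat_repn_prod_eq_zero_general C hS (hnd.imp_left fun h T hT => ?_) F G' hempty
  exact h.eq_zero_of_mul_eq_zero hT (hS.mul_star_map_eq_zero fun v _ => hT v)
end

section
/- Let (Λ, d) be a row-finite k-graph without sources and let {S_f : f ∈ Λ} be a Kumjian–Pask family of operators on a Hilbert space H such that the closed *-subalgebra of B(H) generated by {S_f : f ∈ Λ} acts nondegenerately on H. Then the map f ↦ S_f is a tight representation of the semigroupoid Λ. -/
/-!
Write `P_f = S_f S_f*` and `Q_f = S_f* S_f`, and fix a degree `n`. By (KP4) the `P_f` with `d f = n`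
sum to the vertex projections, so they are pairwise orthogonal, and nondegeneracy says that an
operator is determined by its products with them.

Expanding `P_h` into projections of degree `d f ≥ d h` gives `P_h P_f = P_f` if `h ∣ f` and
`P_h P_f = 0` otherwise. Hence every `P_f P_g` is a sum of range projections of common multiples of
`f` and `g`, which yields the axioms of a representation.

For tightness, let `n` dominate the degrees of the covering `K` of `Λ^{F,G'}`, and let `d f = n`.
Then `⋁_{h ∈ K} P_h` fixes `P_f` if some `h ∈ K` divides `f` and annihilates it otherwise, while
`∏ Q_f ∏ (1 - Q_g)` fixes `P_f` if `f ∈ Λ^{F,G'}` and annihilates it otherwise. By unique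
factorization the two conditions agree.
-/


universe u

/-- A `k`-graph `(Λ, d)`: a small category (viewed as a semigroupoid) together with a degree
functor `d : Λ → ℕ^k` satisfying the unique factorization property. -/
structure KGraph (k : ℕ) (Λ : Type u) extends CatSemigroupoid Λ where
  d : Λ → (Fin k → ℕ)
  d_mul : ∀ f g, D2 f g → d (mul f g) = d f + d g
  factor : ∀ f n m, d f = n + m →
    ∃! p : Λ × Λ, D2 p.1 p.2 ∧ d p.1 = n ∧ d p.2 = m ∧ mul p.1 p.2 = f

namespace KGraph

variable {k : ℕ} {Λ : Type u} (G : KGraph k Λ)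

/-- `Λ^n(v) = {f : r f = v, d f = n}`. -/
def lamN (v : Λ) (n : Fin k → ℕ) : Set Λ := {f | G.rng f = v ∧ G.d f = n}

/-- `(Λ, d)` is row-finite and has no sources: `0 < |Λ^n(v)| < ∞` for every object `v`
and every `n ∈ ℕ^k`. -/
def RowFiniteNoSources : Prop :=
  ∀ v, G.IsObj v → ∀ n : Fin k → ℕ, (G.lamN v n).Finite ∧ (G.lamN v n).Nonempty

end KGraph

section KP

variable {k : ℕ} {Λ : Type u} {B : Type*} [Ring B] [StarRing B]

/-- A Kumjian–Pask family for a row-finite `k`-graph without sources. -/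
structure IsKPFamily (G : KGraph k Λ) (S : Λ → B) : Prop where
  partialIsometry : ∀ f, S f * star (S f) * S f = S f
  kp1_proj : ∀ v, G.IsObj v → star (S v) = S v ∧ S v * S v = S v
  kp1_orth : ∀ u v, G.IsObj u → G.IsObj v → u ≠ v → S u * S v = 0
  kp2 : ∀ f g, G.D2 f g → S (G.mul f g) = S f * S g
  kp3 : ∀ f, star (S f) * S f = S (G.src f)
  kp4 : ∀ v, G.IsObj v → ∀ (n : Fin k → ℕ) (hfin : (G.lamN v n).Finite),
    S v = ∑ f ∈ hfin.toFinset, S f * star (S f)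

end KP
theorem mul_eq_zero_of_isStarProjection_sum {A ι : Type*} [NonUnitalCStarAlgebra A]
    {s : Finset ι} {p : ι → A} (hp : ∀ i ∈ s, IsStarProjection (p i))
    (hsum : IsStarProjection (∑ i ∈ s, p i)) {i j : ι} (hi : i ∈ s) (hj : j ∈ s) (hij : i ≠ j) :
    p i * p j = 0 := by
  let _ := CStarAlgebra.spectralOrder A
  have _ := CStarAlgebra.spectralOrderedRing A
  have nonneg : ∀ x ∈ s, 0 ≤ p x := fun x hx => (hp x hx).nonneg
  have hi_le : p i ≤ ∑ x ∈ s, p x := Finset.single_le_sum nonneg hi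
  have hj_le : p j ≤ ∑ x ∈ s, p x := Finset.single_le_sum nonneg hj
  have hi_le_sub : p i ≤ ∑ x ∈ s, p x - p j :=
    le_sub_iff_add_le.2 (Finset.add_le_sum nonneg hi hj hij)
  have hsub : IsStarProjection (∑ x ∈ s, p x - p j) := ((hp j hj).le_iff_sub hsum).1 hj_le
  have hmul := ((hp i hi).le_iff_mul_eq_left hsub).1 hi_le_sub
  rwa [mul_sub, ((hp i hi).le_iff_mul_eq_left hsum).1 hi_le, sub_eq_self] at hmul

section Join

variable {Λ : Type u} {B : Type*} [Ring B]

theorem one_sub_mul_eq_ite {p a : B} {c : Prop} [Decidable c] (h : p * a = if c then a else 0) :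
    (1 - p) * a = if ¬ c then a else 0 := by
  rw [sub_mul, one_mul, h]
  split_ifs <;> simp

theorem fprod_mul_eq_ite {F : Finset Λ} {T : Λ → B} {a : B} {c : Λ → Prop} [DecidablePred c]
    (h : ∀ x ∈ F, T x * a = if c x then a else 0) :
    fprod F T * a = if ∀ x ∈ F, c x then a else 0 := by
  suffices key : ∀ l : List Λ, (∀ x ∈ l, T x * a = if c x then a else 0) →
      (l.map T).prod * a = if ∀ x ∈ l, c x then a else 0 by
    simpa only [fprod, Finset.mem_toList] using key F.toList (by simpa using h)
  intro l hl
  induction l with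
  | nil => simp
  | cons x l ih =>
    rw [List.forall_mem_cons] at hl
    rw [List.map_cons, List.prod_cons, mul_assoc, ih hl.2, mul_ite, hl.1, mul_zero]
    simp only [List.forall_mem_cons, ite_and]
    split_ifs <;> rfl

theorem joinP_mul_eq_ite [StarRing B] {F : Finset Λ} {S : Λ → B} {a : B} {c : Λ → Prop}
    [DecidablePred c] (h : ∀ x ∈ F, PP S x * a = if c x then a else 0) :
    joinP F S * a = if ∃ x ∈ F, c x then a else 0 := by
  have hprod := fprod_mul_eq_ite fun x hx => one_sub_mul_eq_ite (h x hx)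
  rw [joinP, one_sub_mul_eq_ite hprod]
  simp only [not_forall, not_not, exists_prop]

end Join

namespace IsRepn

variable {Λ : Type u} {B : Type*} [Ring B] [StarRing B] {G : Semigroupoid Λ} {S : Λ → B}

open scoped Classical in
theorem QQ_mul_PP (hS : IsRepn G S) (g f : Λ) :
    QQ S g * PP S f = if G.D2 g f then PP S f else 0 := by
  split_ifs with hgf
  · exact hS.QdomP g f hgf
  · rw [QQ, PP, mul_assoc, ← mul_assoc (S g), hS.map_ncomp g f hgf, zero_mul, mul_zero]

open scoped Classical in
theorem fprod_QQ_mul_PP (hS : IsRepn G S) (F G' : Finset Λ) (f : Λ) :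
    fprod F (QQ S) * fprod G' (fun g => 1 - QQ S g) * PP S f =
      if f ∈ G.lamFG F G' then PP S f else 0 := by
  have hF := fprod_mul_eq_ite (F := F) fun g _ => hS.QQ_mul_PP g f
  have hG' := fprod_mul_eq_ite (F := G') fun g _ => one_sub_mul_eq_ite (hS.QQ_mul_PP g f)
  rw [mul_assoc, hG', mul_ite, hF, mul_zero, ← ite_and]
  exact if_congr and_comm rfl rfl

end IsRepn

namespace CatSemigroupoid

variable {Λ : Type u} {C : CatSemigroupoid Λ} {f g : Λ}

theorem divides_iff_exists_mul : C.Divides f g ↔ ∃ e, C.D2 f e ∧ C.mul f e = g := by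
  refine ⟨?_, Or.inr⟩
  rintro (rfl | h)
  · exact ⟨C.src f, (C.comp_iff _ _).2 (C.rng_obj _ (C.obj_src f)).symm, C.mul_src f⟩
  · exact h

theorem rng_eq_of_divides (h : C.Divides f g) : C.rng f = C.rng g := by
  obtain ⟨e, hfe, rfl⟩ := divides_iff_exists_mul.1 h
  exact (C.rng_mul f e hfe).symm

theorem mem_lamFG_congr (h : C.rng f = C.rng g) (F G' : Finset Λ) :
    f ∈ C.lamFG F G' ↔ g ∈ C.lamFG F G' := by
  simp only [Semigroupoid.lamFG, Set.mem_ofPred_eq, C.comp_iff, h]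

end CatSemigroupoid

namespace KGraph

variable {k : ℕ} {Λ : Type u} {G : KGraph k Λ}

/-- Row-finiteness: each `Λ^n(v)` is finite, possibly empty. -/
def RowFinite (G : KGraph k Λ) : Prop :=
  ∀ v, G.IsObj v → ∀ n : Fin k → ℕ, (G.lamN v n).Finite

theorem RowFiniteNoSources.rowFinite (hG : G.RowFiniteNoSources) : G.RowFinite :=
  fun v hv n => (hG v hv n).1

theorem D2_of_mem_lamN_src {f e : Λ} {n : Fin k → ℕ} (he : e ∈ G.lamN (G.src f) n) : G.D2 f e :=
  (G.comp_iff f e).2 he.1.symm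

theorem exists_mul_eq_of_le_d {f : Λ} {n : Fin k → ℕ} (hn : n ≤ G.d f) :
    ∃ g e, G.D2 g e ∧ G.d g = n ∧ G.mul g e = f := by
  obtain ⟨⟨g, e⟩, ⟨hge, hg, -, hf⟩, -⟩ := G.factor f n (G.d f - n) (add_tsub_cancel_of_le hn).symm
  exact ⟨g, e, hge, hg, hf⟩

theorem left_eq_of_mul_eq_mul {f g a b : Λ} (hfa : G.D2 f a) (hgb : G.D2 g b) (hd : G.d f = G.d g)
    (h : G.mul f a = G.mul g b) : f = g := by
  have hd' : G.d a = G.d b := by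
    have := congrArg G.d h
    rwa [G.d_mul f a hfa, G.d_mul g b hgb, hd, add_right_inj] at this
  exact congrArg Prod.fst <| (G.factor _ (G.d g) (G.d b) (G.d_mul g b hgb)).unique
    (y₁ := (f, a)) (y₂ := (g, b)) ⟨hfa, hd, hd', h⟩ ⟨hgb, rfl, rfl, rfl⟩

theorem divides_of_intersects {f g : Λ} (h : G.Intersects f g) (hd : G.d g ≤ G.d f) :
    G.Divides g f := by
  obtain ⟨m, hfm, hgm⟩ := h
  obtain ⟨a, hfa, rfl⟩ := CatSemigroupoid.divides_iff_exists_mul.1 hfm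
  obtain ⟨b, hgb, hb⟩ := CatSemigroupoid.divides_iff_exists_mul.1 hgm
  obtain ⟨g', e, hg'e, hg', rfl⟩ := exists_mul_eq_of_le_d hd
  obtain ⟨-, hg'ea, hassoc⟩ := G.assoc₂ g' e a hg'e hfa
  obtain rfl : g = g' := left_eq_of_mul_eq_mul hgb hg'ea hg'.symm (hb.trans hassoc)
  exact Or.inr ⟨e, hg'e, rfl⟩

theorem exists_mem_divides_iff_mem_lamFG {F G' K : Finset Λ} {f : Λ}
    (hK : G.IsCovering ↑K (G.lamFG F G')) (hd : ∀ h ∈ K, G.d h ≤ G.d f) :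
    (∃ h ∈ K, G.Divides h f) ↔ f ∈ G.lamFG F G' := by
  constructor
  · rintro ⟨h, hhK, hhf⟩
    exact (CatSemigroupoid.mem_lamFG_congr (CatSemigroupoid.rng_eq_of_divides hhf) F G').1
      (hK.1 hhK)
  · intro hf
    obtain ⟨h, hhK, hfh⟩ := hK.2 f hf
    exact ⟨h, hhK, divides_of_intersects hfh (hd h hhK)⟩

end KGraph

namespace IsKPFamily

section StarRing

variable {k : ℕ} {Λ : Type u} {B : Type*} [Ring B] [StarRing B] {G : KGraph k Λ} {S : Λ → B}

theorem rng_mul (hS : IsKPFamily G S) (f : Λ) : S (G.rng f) * S f = S f := by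
  rw [← hS.kp2 _ _ ((G.comp_iff _ _).2 (G.src_obj _ (G.obj_rng f))), G.rng_mul']

theorem mul_src (hS : IsKPFamily G S) (f : Λ) : S f * S (G.src f) = S f := by
  rw [← hS.kp3, ← mul_assoc, hS.partialIsometry]

theorem mul_eq_zero_of_not_D2 (hS : IsKPFamily G S) {f g : Λ} (h : ¬ G.D2 f g) :
    S f * S g = 0 := by
  have hobj : S (G.src f) * S (G.rng g) = 0 :=
    hS.kp1_orth _ _ (G.obj_src f) (G.obj_rng g) (mt (G.comp_iff f g).2 h)
  calc S f * S g = S f * (S (G.src f) * S (G.rng g)) * S g := by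
        rw [← mul_assoc, hS.mul_src, mul_assoc, hS.rng_mul]
    _ = 0 := by rw [hobj, mul_zero, zero_mul]

theorem isStarProjection_obj (hS : IsKPFamily G S) {v : Λ} (hv : G.IsObj v) :
    IsStarProjection (S v) :=
  ⟨(hS.kp1_proj v hv).2, (hS.kp1_proj v hv).1⟩

theorem isStarProjection_PP (hS : IsKPFamily G S) (f : Λ) : IsStarProjection (PP S f) where
  isIdempotentElem := by rw [IsIdempotentElem, PP, ← mul_assoc, hS.partialIsometry]
  isSelfAdjoint := .mul_star_self (S f)

theorem QQ_eq_PP_src (hS : IsKPFamily G S) (f : Λ) : QQ S f = PP S (G.src f) := by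
  obtain ⟨hstar, hidem⟩ := hS.kp1_proj _ (G.obj_src f)
  rw [QQ, PP, hS.kp3, hstar, hidem]

theorem rng_mul_PP (hS : IsKPFamily G S) (f : Λ) : S (G.rng f) * PP S f = PP S f := by
  rw [PP, ← mul_assoc, hS.rng_mul]

theorem PP_mul_rng (hS : IsKPFamily G S) (f : Λ) : PP S f * S (G.rng f) = PP S f := by
  simpa only [star_mul, (hS.isStarProjection_PP f).isSelfAdjoint.star_eq,
    (hS.isStarProjection_obj (G.obj_rng f)).isSelfAdjoint.star_eq] using
    congrArg star (hS.rng_mul_PP f)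

theorem PP_mul (hS : IsKPFamily G S) {f e : Λ} (h : G.D2 f e) :
    PP S (G.mul f e) = S f * PP S e * star (S f) := by
  simp only [PP, hS.kp2 f e h, star_mul, mul_assoc]

theorem PP_eq_sum (hS : IsKPFamily G S) (f : Λ) (n : Fin k → ℕ)
    (hfin : (G.lamN (G.src f) n).Finite) :
    PP S f = ∑ e ∈ hfin.toFinset, PP S (G.mul f e) := by
  calc PP S f = S f * S (G.src f) * star (S f) := by rw [hS.mul_src, PP]
    _ = ∑ e ∈ hfin.toFinset, S f * PP S e * star (S f) := by
        rw [hS.kp4 _ (G.obj_src f) n hfin, Finset.mul_sum, Finset.sum_mul]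
        rfl
    _ = ∑ e ∈ hfin.toFinset, PP S (G.mul f e) := Finset.sum_congr rfl fun e he =>
        (hS.PP_mul (KGraph.D2_of_mem_lamN_src (hfin.mem_toFinset.1 he))).symm

theorem PP_mul_PP_of_divides (hS : IsKPFamily G S) {f g : Λ} (h : G.Divides f g) :
    PP S f * PP S g = PP S g := by
  obtain ⟨e, hfe, rfl⟩ := CatSemigroupoid.divides_iff_exists_mul.1 h
  rw [hS.PP_mul hfe]
  simp only [PP, ← mul_assoc, hS.partialIsometry]

end StarRing

section CStarAlgebra

variable {k : ℕ} {Λ : Type u} {B : Type*} [CStarAlgebra B] {G : KGraph k Λ} {S : Λ → B}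

theorem PP_mul_PP_eq_zero_of_d_eq (hS : IsKPFamily G S) (hG : G.RowFinite) {f g : Λ}
    (hd : G.d f = G.d g) (hne : f ≠ g) : PP S f * PP S g = 0 := by
  by_cases hr : G.rng f = G.rng g
  · have hfin := hG (G.rng g) (G.obj_rng g) (G.d g)
    have hsum : IsStarProjection (∑ m ∈ hfin.toFinset, PP S m) :=
      (hS.kp4 _ (G.obj_rng g) _ hfin).subst (hS.isStarProjection_obj (G.obj_rng g))
    exact mul_eq_zero_of_isStarProjection_sum (fun m _ => hS.isStarProjection_PP m) hsum
      (hfin.mem_toFinset.2 ⟨hr, hd⟩) (hfin.mem_toFinset.2 ⟨rfl, rfl⟩) hne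
  · calc PP S f * PP S g = PP S f * (S (G.rng f) * S (G.rng g)) * PP S g := by
          rw [← mul_assoc, hS.PP_mul_rng, mul_assoc, hS.rng_mul_PP]
      _ = 0 := by
          rw [hS.kp1_orth _ _ (G.obj_rng f) (G.obj_rng g) hr, mul_zero, zero_mul]

open scoped Classical in
theorem PP_mul_PP_of_d_le (hS : IsKPFamily G S) (hG : G.RowFinite) {f g : Λ}
    (hd : G.d f ≤ G.d g) : PP S f * PP S g = if G.Divides f g then PP S g else 0 := by
  split_ifs with hfg
  · exact hS.PP_mul_PP_of_divides hfg
  · have hfin := hG (G.src f) (G.obj_src f) (G.d g - G.d f)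
    rw [hS.PP_eq_sum f _ hfin, Finset.sum_mul]
    refine Finset.sum_eq_zero fun e he => ?_
    rw [Set.Finite.mem_toFinset] at he
    have hfe := KGraph.D2_of_mem_lamN_src he
    have hd_mul : G.d (G.mul f e) = G.d g := by
      rw [G.d_mul f e hfe, he.2, add_tsub_cancel_of_le hd]
    exact hS.PP_mul_PP_eq_zero_of_d_eq hG hd_mul fun h => hfg (Or.inr ⟨e, hfe, h⟩)

open scoped Classical in
theorem PP_mul_PP_eq_sum (hS : IsKPFamily G S) (hG : G.RowFinite) (f g : Λ) :
    PP S f * PP S g =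
      ∑ e ∈ (hG (G.src g) (G.obj_src g) (G.d f ⊔ G.d g - G.d g)).toFinset,
        if G.Divides f (G.mul g e) then PP S (G.mul g e) else 0 := by
  rw [hS.PP_eq_sum g _ (hG (G.src g) (G.obj_src g) (G.d f ⊔ G.d g - G.d g)), Finset.mul_sum]
  refine Finset.sum_congr rfl fun e he => hS.PP_mul_PP_of_d_le hG ?_
  rw [Set.Finite.mem_toFinset] at he
  rw [G.d_mul g e (KGraph.D2_of_mem_lamN_src he), he.2, add_tsub_cancel_of_le le_sup_right]
  exact le_sup_left

theorem commute_PP (hS : IsKPFamily G S) (hG : G.RowFinite) (f g : Λ) :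
    Commute (PP S f) (PP S g) := by
  have hsa : ∀ m, IsSelfAdjoint (PP S m) := fun m => (hS.isStarProjection_PP m).isSelfAdjoint
  rw [(hsa f).commute_iff (hsa g), hS.PP_mul_PP_eq_sum hG f g]
  refine isSelfAdjoint_sum _ fun e _ => ?_
  split_ifs
  · exact hsa _
  · exact .zero B

theorem PP_mul_PP_eq_zero_of_disjnt (hS : IsKPFamily G S) (hG : G.RowFinite) {f g : Λ}
    (hfg : G.Disjnt f g) : PP S f * PP S g = 0 := by
  rw [hS.PP_mul_PP_eq_sum hG f g]
  refine Finset.sum_eq_zero fun e he => if_neg fun hf => hfg ⟨G.mul g e, hf, Or.inr ⟨e, ?_, rfl⟩⟩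
  exact KGraph.D2_of_mem_lamN_src ((Set.Finite.mem_toFinset _).1 he)

theorem isRepn (hS : IsKPFamily G S) (hG : G.RowFinite) : IsRepn G.toSemigroupoid S where
  partialIsometry := hS.partialIsometry
  map_comp f g h := (hS.kp2 f g h).symm
  map_ncomp _ _ := hS.mul_eq_zero_of_not_D2
  commQQ f g := by simpa only [hS.QQ_eq_PP_src] using hS.commute_PP hG (G.src f) (G.src g)
  commQP f g := by simpa only [hS.QQ_eq_PP_src] using hS.commute_PP hG (G.src f) g
  commPP := hS.commute_PP hG
  orthPP _ _ := hS.PP_mul_PP_eq_zero_of_disjnt hG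
  QdomP f g h := by rw [QQ, hS.kp3, (G.comp_iff f g).1 h, hS.rng_mul_PP]

theorem isTight (hS : IsKPFamily G S) (hG : G.RowFinite)
    (hsep : ∀ a : B, (∀ v, G.IsObj v → a * S v = 0) → a = 0) : IsTight G.toSemigroupoid S := by
  classical
  intro F G' K hK
  refine sub_eq_zero.1 (hsep _ fun v hv => ?_)
  have hfin := hG v hv (K.sup G.d)
  rw [sub_mul, sub_eq_zero, hS.kp4 v hv _ hfin, Finset.mul_sum, Finset.mul_sum]
  refine Finset.sum_congr rfl fun f hf => ?_
  have hd : ∀ h ∈ K, G.d h ≤ G.d f := fun h hh =>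
    (hfin.mem_toFinset.1 hf).2 ▸ Finset.le_sup hh
  calc joinP K S * PP S f
      = if ∃ h ∈ K, G.Divides h f then PP S f else 0 :=
        joinP_mul_eq_ite fun h hh => hS.PP_mul_PP_of_d_le hG (hd h hh)
    _ = if f ∈ G.lamFG F G' then PP S f else 0 :=
        if_congr (KGraph.exists_mem_divides_iff_mem_lamFG hK hd) rfl rfl
    _ = fprod F (QQ S) * fprod G' (fun g => 1 - QQ S g) * PP S f :=
        ((hS.isRepn hG).fprod_QQ_mul_PP F G' f).symm

end CStarAlgebra

end IsKPFamily

section Nondegeneracy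

theorem mul_eq_zero_of_mem_nonUnitalStarAlgebra_adjoin {R A : Type*} [CommSemiring R] [StarRing R]
    [NonUnitalSemiring A] [StarRing A] [Module R A] [IsScalarTower R A A] [SMulCommClass R A A]
    [StarModule R A] {s : Set A} {a x : A} (hs : ∀ y ∈ s, a * y = 0)
    (hs_star : ∀ y ∈ s, a * star y = 0) (hx : x ∈ NonUnitalStarAlgebra.adjoin R s) :
    a * x = 0 := by
  rw [← NonUnitalStarSubalgebra.mem_toNonUnitalSubalgebra,
    NonUnitalStarAlgebra.adjoin_toNonUnitalSubalgebra] at hx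
  induction hx using NonUnitalAlgebra.adjoin_induction with
  | mem y hy =>
    rcases hy with hy | hy
    · exact hs y hy
    · simpa only [star_star] using hs_star (star y) hy
  | add y z _ _ hy hz => rw [mul_add, hy, hz, add_zero]
  | zero => exact mul_zero a
  | mul y z _ _ hy _ => rw [← mul_assoc, hy, zero_mul]
  | smul r y _ hy => rw [mul_smul_comm, hy, smul_zero]

variable {Λ : Type u} {H : Type*} [NormedAddCommGroup H] [InnerProductSpace ℂ H] [CompleteSpace H]
  {S : Λ → H →L[ℂ] H} {a : H →L[ℂ] H}

theorem Nondegen.eq_zero_of_forall_mul_eq_zero (hS : Nondegen S) (ha : ∀ f, a * S f = 0)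
    (ha_star : ∀ f, a * star (S f) = 0) : a = 0 := by
  have hclosure : ∀ x ∈ (NonUnitalStarAlgebra.adjoin ℂ (Set.range S)).topologicalClosure,
      a * x = 0 := by
    have hclosed : IsClosed {x : H →L[ℂ] H | a * x = 0} :=
      isClosed_eq (continuous_const_mul a) continuous_const
    refine closure_minimal (fun x hx => ?_) hclosed
    exact mul_eq_zero_of_mem_nonUnitalStarAlgebra_adjoin (Set.forall_mem_range.2 ha)
      (Set.forall_mem_range.2 ha_star) hx
  have hker : (⊤ : Submodule ℂ H) ≤ a.ker := by
    rw [← hS]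
    refine Submodule.topologicalClosure_minimal _ (Submodule.span_le.2 ?_) a.isClosed_ker
    rintro _ ⟨x, hx, ξ, rfl⟩
    exact DFunLike.congr_fun (hclosure x hx) ξ
  ext ξ
  exact hker (Submodule.mem_top (x := ξ))

theorem IsKPFamily.eq_zero_of_forall_mul_obj_eq_zero {k : ℕ} {G : KGraph k Λ}
    (hS : IsKPFamily G S) (hnd : Nondegen S) (ha : ∀ v, G.IsObj v → a * S v = 0) : a = 0 := by
  refine hnd.eq_zero_of_forall_mul_eq_zero (fun f => ?_) fun f => ?_
  · rw [← hS.rng_mul f, ← mul_assoc, ha _ (G.obj_rng f), zero_mul]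
  · rw [← hS.mul_src f, star_mul, (hS.kp1_proj _ (G.obj_src f)).1, ← mul_assoc,
      ha _ (G.obj_src f), zero_mul]

end Nondegeneracy

theorem kp_tight_repn_general {k : ℕ} {Λ : Type u} {B : Type*} [CStarAlgebra B]
    (G : KGraph k Λ) (hG : G.RowFinite) {S : Λ → B} (hS : IsKPFamily G S)
    (hsep : ∀ a : B, (∀ v, G.IsObj v → a * S v = 0) → a = 0) :
    IsRepn G.toSemigroupoid S ∧ IsTight G.toSemigroupoid S :=
  ⟨hS.isRepn hG, hS.isTight hG hsep⟩

/-- A nondegenerate Kumjian–Pask family on a Hilbert space is a tight representation of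
the underlying semigroupoid. -/
theorem kp_tight_repn {k : ℕ} {Λ : Type u} {H : Type*} [NormedAddCommGroup H]
    [InnerProductSpace ℂ H] [CompleteSpace H]
    (G : KGraph k Λ) (hrf : G.RowFiniteNoSources)
    {S : Λ → H →L[ℂ] H} (hS : IsKPFamily G S) (hnd : Nondegen S) :
    IsRepn G.toSemigroupoid S ∧ IsTight G.toSemigroupoid S :=
  kp_tight_repn_general G hrf.rowFinite hS fun _ ha => hS.eq_zero_of_forall_mul_obj_eq_zero hnd ha
end
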